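/- arXiv:1712.04980 — 2 statements merged into one kernel-verified Lean document; each statement's English description precedes it below -/
import Mathlib

section
/- Fix n users indexed by Fin n (ordered by SIC decoding order, so user u experiences interference only from users k with k > u), m frequency resource blocks indexed by Fin m, channel gains h : Fin n → Fin m → ℝ with h u r > 0 for all u, r, noise power σ² > 0, bandwidth B > 0, rate requirements c : Fin n → ℝ, and power budgets Pmax : Fin n → ℝ. Define the rate of user u under powers p : Fin n → Fin m → ℝ as Rate u p = ∑_{r} B · log(1 + h u r · p u r / (σ² + ∑_{k > u} h k r · p k r)). Call p P2-feasible if p u r > 0 for all u, r; ∑_r p u r ≤ Pmax u for all u; and c u ≤ Rate u p for all u. Call a triple (S, Z, R) with S, Z : Fin n → Fin m → ℝ and R : Fin n → ℝ P3-feasible if c u ≤ R u for all u; ∑_r exp(S u r) ≤ Pmax u for all u; Z u r ≤ B · log(1 + h u r · exp(S u r) / (σ² + ∑_{k > u} h k r · exp(S k r))) for all u, r; and R u = ∑_r Z u r for all u. Then the infimum of ∑_{u,r} p u r over all P2-feasible p equals the infimum of ∑_{u,r} exp(S u r) over all P3-feasible (S, Z, R). (Theorem 1: optimization problem P2 is equivalent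 to optimization problem P3.) -/
open Finset

/-- Rate of user `u` under powers `p`, with SIC: user `u` sees interference
only from users `k > u`. -/
noncomputable def NomaRate {n m : ℕ} (h : Fin n → Fin m → ℝ) (σ2 B : ℝ)
    (u : Fin n) (p : Fin n → Fin m → ℝ) : ℝ :=
  ∑ r, B * Real.log (1 + h u r * p u r /
    (σ2 + ∑ k ∈ univ.filter (fun k => u < k), h k r * p k r))

/-- Theorem 1: problems P2 and P3 have the same optimal value. -/
theorem P2_equiv_P3 {n m : ℕ} (h : Fin n → Fin m → ℝ) (hh : ∀ u r, 0 < h u r)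
    (σ2 : ℝ) (hσ : 0 < σ2) (B : ℝ) (hB : 0 < B)
    (c : Fin n → ℝ) (Pmax : Fin n → ℝ) :
    sInf { x : ℝ | ∃ p : Fin n → Fin m → ℝ,
        (∀ u r, 0 < p u r) ∧
        (∀ u, ∑ r, p u r ≤ Pmax u) ∧
        (∀ u, c u ≤ NomaRate h σ2 B u p) ∧
        x = ∑ u, ∑ r, p u r } =
    sInf { x : ℝ | ∃ (S Z : Fin n → Fin m → ℝ) (R : Fin n → ℝ),
        (∀ u, c u ≤ R u) ∧
        (∀ u, ∑ r, Real.exp (S u r) ≤ Pmax u) ∧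
        (∀ u r, Z u r ≤ B * Real.log (1 + h u r * Real.exp (S u r) /
          (σ2 + ∑ k ∈ univ.filter (fun k => u < k), h k r * Real.exp (S k r)))) ∧
        (∀ u, R u = ∑ r, Z u r) ∧
        x = ∑ u, ∑ r, Real.exp (S u r) } := by
  congr 1
  ext x
  constructor
  · rintro ⟨p, hp, hP, hc, rfl⟩
    have e : ∀ u r, Real.exp (Real.log (p u r)) = p u r := fun u r => Real.exp_log (hp u r)
    refine ⟨fun u r => Real.log (p u r), fun u r => B * Real.log (1 + h u r * p u r /
      (σ2 + ∑ k ∈ univ.filter (fun k => u < k), h k r * p k r)),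
      fun u => NomaRate h σ2 B u p, hc, ?_, ?_, ?_, ?_⟩
    · simpa only [e] using hP
    · intro u r
      simp only [e]
      exact le_refl _
    · intro u
      rfl
    · simp only [e]
  · rintro ⟨S, Z, R, hc, hP, hZ, hR, rfl⟩
    refine ⟨fun u r => Real.exp (S u r), fun u r => Real.exp_pos _, hP, ?_, rfl⟩
    intro u
    refine (hc u).trans ?_
    rw [hR u]
    exact Finset.sum_le_sum fun r _ => hZ u r
end

section
/- Fix n users indexed by Fin n, m resource blocks indexed by Fin m, channel gains h : Fin n → Fin m → ℝ with h u r > 0, noise power σ² > 0, rate requirements c : Fin n → ℝ, and power budgets Pmax : Fin n → ℝ. Consider triples (S, Z, R) with S, Z : Fin n → Fin m → ℝ and R : Fin n → ℝ. Then the set of triples satisfying: (C1) c u ≤ R u for all u; (C2) ∑_r exp(S u r) ≤ Pmax u for all u; (C3') Z u r + log( (σ² / h u r) · exp(-(S u r)) + ∑_{k > u} (h k r / h u r) · exp(S k r - S u r) ) ≤ 0 for all u, r; and (C4) R u = ∑_r Z u r for all u, is a convex set, and the objective function (S, Z, R) ↦ ∑_{u,r} exp(S u r) is convex. (Theorem 2: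 optimization problem P3 is convex in the high SINR regime.) -/
open Finset

lemma exp_comb_le (x y a b : ℝ) (ha : 0 ≤ a) (hb : 0 ≤ b) (hab : a + b = 1) :
    Real.exp (a * x + b * y) ≤ a * Real.exp x + b * Real.exp y := by
  simpa using convexOn_exp.2 (Set.mem_univ x) (Set.mem_univ y) ha hb hab

lemma c3_iff {ι : Type*} (s : Finset ι) (z x w : ℝ) (hw : 0 < w) (v : ι → ℝ)
    (hv : ∀ k, 0 < v k) (y : ι → ℝ) :
    z + Real.log (w * Real.exp (-x) + ∑ k ∈ s, v k * Real.exp (y k - x)) ≤ 0 ↔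
      w * Real.exp (z - x) + ∑ k ∈ s, v k * Real.exp (z + (y k - x)) ≤ 1 := by
  have hpos : 0 < w * Real.exp (-x) + ∑ k ∈ s, v k * Real.exp (y k - x) :=
    add_pos_of_pos_of_nonneg (mul_pos hw (Real.exp_pos _))
      (Finset.sum_nonneg fun k _ => (mul_pos (hv k) (Real.exp_pos _)).le)
  have e : w * Real.exp (z - x) + ∑ k ∈ s, v k * Real.exp (z + (y k - x)) =
      Real.exp (z + Real.log (w * Real.exp (-x) + ∑ k ∈ s, v k * Real.exp (y k - x))) := by
    rw [Real.exp_add, Real.exp_log hpos, mul_add, Finset.mul_sum, sub_eq_add_neg, Real.exp_add]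
    congr 1
    · ring
    · refine Finset.sum_congr rfl fun k _ => ?_
      rw [Real.exp_add]; ring
  rw [e, Real.exp_le_one_iff]

/-- Theorem 2: problem P3 is convex in the high SINR regime — the feasible set
(with constraint C3 replaced by its high-SINR log-sum-exp form C3') is convex
and the objective is convex. -/
theorem P3_convex_high_SINR
    {n m : ℕ} (h : Fin n → Fin m → ℝ) (hh : ∀ u r, 0 < h u r)
    (σ2 : ℝ) (hσ : 0 < σ2)
    (c : Fin n → ℝ) (Pmax : Fin n → ℝ) :
    Convex ℝ { t : (Fin n → Fin m → ℝ) × (Fin n → Fin m → ℝ) × (Fin n → ℝ) |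
        (∀ u, c u ≤ t.2.2 u) ∧
        (∀ u, ∑ r, Real.exp (t.1 u r) ≤ Pmax u) ∧
        (∀ u r, t.2.1 u r + Real.log ((σ2 / h u r) * Real.exp (-(t.1 u r)) +
          ∑ k ∈ univ.filter (fun k => u < k),
            (h k r / h u r) * Real.exp (t.1 k r - t.1 u r)) ≤ 0) ∧
        (∀ u, t.2.2 u = ∑ r, t.2.1 u r) } ∧
    ConvexOn ℝ Set.univ
      (fun t : (Fin n → Fin m → ℝ) × (Fin n → Fin m → ℝ) × (Fin n → ℝ) =>
        ∑ u, ∑ r, Real.exp (t.1 u r)) := by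
  constructor
  · rintro ⟨S, Z, R⟩ ⟨h1, h2, h3, h4⟩ ⟨S', Z', R'⟩ ⟨h1', h2', h3', h4'⟩ a b ha hb hab
    simp only at h1 h2 h3 h4 h1' h2' h3' h4'
    simp only [Set.mem_setOf_eq, Prod.smul_mk, Prod.mk_add_mk, Pi.add_apply, Pi.smul_apply,
      smul_eq_mul]
    refine ⟨fun u => ?_, fun u => ?_, fun u r => ?_, fun u => ?_⟩
    · calc c u = a * c u + b * c u := by rw [← add_mul, hab, one_mul]
        _ ≤ _ := add_le_add (mul_le_mul_of_nonneg_left (h1 u) ha)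
          (mul_le_mul_of_nonneg_left (h1' u) hb)
    · calc ∑ r, Real.exp (a * S u r + b * S' u r)
          ≤ ∑ r, (a * Real.exp (S u r) + b * Real.exp (S' u r)) :=
            Finset.sum_le_sum fun r _ => exp_comb_le _ _ a b ha hb hab
        _ = a * ∑ r, Real.exp (S u r) + b * ∑ r, Real.exp (S' u r) := by
            rw [Finset.sum_add_distrib, Finset.mul_sum, Finset.mul_sum]
        _ ≤ a * Pmax u + b * Pmax u := add_le_add (mul_le_mul_of_nonneg_left (h2 u) ha)
          (mul_le_mul_of_nonneg_left (h2' u) hb)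
        _ = Pmax u := by rw [← add_mul, hab, one_mul]
    · have hw : 0 < σ2 / h u r := div_pos hσ (hh u r)
      have hv : ∀ k, 0 < h k r / h u r := fun k => div_pos (hh k r) (hh u r)
      have k1 := (c3_iff _ (Z u r) (S u r) _ hw (fun k => h k r / h u r) hv
        (fun k => S k r)).1 (h3 u r)
      have k2 := (c3_iff _ (Z' u r) (S' u r) _ hw (fun k => h k r / h u r) hv
        (fun k => S' k r)).1 (h3' u r)
      refine (c3_iff _ (a * Z u r + b * Z' u r) (a * S u r + b * S' u r) _ hw
        (fun k => h k r / h u r) hv (fun k => a * S k r + b * S' k r)).2 ?_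
      have k3 := add_le_add (mul_le_mul_of_nonneg_left k1 ha) (mul_le_mul_of_nonneg_left k2 hb)
      rw [mul_one, mul_one, hab] at k3
      refine le_trans ?_ k3
      rw [mul_add, mul_add, add_add_add_comm, Finset.mul_sum, Finset.mul_sum,
        ← Finset.sum_add_distrib]
      refine add_le_add ?_ (Finset.sum_le_sum fun k _ => ?_)
      · have := mul_le_mul_of_nonneg_left
          (exp_comb_le (Z u r - S u r) (Z' u r - S' u r) a b ha hb hab) hw.le
        convert this using 1
        · congr 2; ring
        · ring
      · have := mul_le_mul_of_nonneg_left (exp_comb_le (Z u r + (S k r - S u r))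
          (Z' u r + (S' k r - S' u r)) a b ha hb hab) (hv k).le
        convert this using 1
        · congr 2; ring
        · ring
    · rw [h4, h4', Finset.sum_add_distrib, Finset.mul_sum, Finset.mul_sum]
  · refine ⟨convex_univ, ?_⟩
    rintro ⟨S, Z, R⟩ - ⟨S', Z', R'⟩ - a b ha hb hab
    simp only [Prod.smul_mk, Prod.mk_add_mk, Pi.add_apply, Pi.smul_apply, smul_eq_mul]
    simp only [Finset.mul_sum, ← Finset.sum_add_distrib]
    exact Finset.sum_le_sum fun u _ => Finset.sum_le_sum fun r _ =>
      exp_comb_le _ _ a b ha hb hab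
end
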